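/- For every positive integer λ and every ε ∈ (0, 1/5], there exist constants C > 0 and y₀ > 0 (depending on a₁, a₂, λ, ε) such that for all y ≥ y₀ one has Σ_{n ≥ y, gcd(n,a₂)=1} ρ_λ(n)/φ(ℓ(n)) ≤ C·(log log y)/y^{1/(1+3λ)−ε}, where the sum is over positive integers n ≥ y coprime to a₂. -/

import Mathlib

/-!
By Rankin's trick the tail beyond `y` is at most `y ^ (-σ) * ∑ n ^ σ * ρ_λ(n) / φ(ℓ(n))`, and this
series converges for every `σ < 1 / (1 + 2λ)`, which leaves room above `1 / (1 + 3λ)`.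

If `ρ_λ(n) ≠ 0` then `n` has between `1` and `λ` prime factors; list `n` under the largest one, `p`.
The rank `z` of `p` divides `z_u(n)`, so `φ(ℓ(n)) ≥ φ(n) φ(z) / gcd(n, z)`, and `z` is prime to `p`
unless `p` divides `a₂ (a₁² + 4a₂)`, in which case `z` is replaced by `1`. Summing over the
multiples `n` of `p` with at most `λ` prime factors, all of them `≤ p`, leaves, up to arbitrarily
small changes of the exponents, the series `∑ p ^ (-(1 - λσ)) * z ^ (-(1 - σ))` over primes.
A prime of rank `t` divides `u t`, so there are `O(t)` of them. Hence the primes `p ≥ z ^ 2` can be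
summed through `p ^ (-(1 - λσ)) ≤ z ^ (-2 (1 - λσ))`, and the others through `z > p ^ (1 / 2)`.
-/

open scoped BigOperators

/-- `gu u n = gcd(n, u n)`. -/
noncomputable def gu (u : ℕ → ℤ) (n : ℕ) : ℕ := Int.gcd (n : ℤ) (u n)

/-- Rank of appearance of `m` in the sequence `u`. -/
noncomputable def zu (u : ℕ → ℤ) (m : ℕ) : ℕ := sInf {n : ℕ | 0 < n ∧ (m : ℤ) ∣ u n}

/-- `ℓ(m) = lcm(m, z_u(m))`. -/
noncomputable def ellu (u : ℕ → ℤ) (m : ℕ) : ℕ := Nat.lcm m (zu u m)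

/-- The arithmetic function `ρ_λ`. -/
noncomputable def rho (lam n : ℕ) : ℝ :=
  (Nat.factorial lam : ℝ) *
    ∑ f ∈ (Fintype.piFinset fun _ : n.primeFactors => Finset.range (lam + 1)) |>.filter
        (fun f => ∑ p, f p = lam),
      ∏ p : n.primeFactors,
        (((n.factorization (p : ℕ) : ℝ) ^ f p - ((n.factorization (p : ℕ) : ℝ) - 1) ^ f p) *
          Real.log ((p : ℕ) : ℝ) ^ f p / (Nat.factorial (f p) : ℝ))

/-- The set of primes `≤ x`. -/
noncomputable def primesUpTo (x : ℝ) : Finset ℕ :=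
  (Finset.range (⌊x⌋₊ + 1)).filter Nat.Prime

/-- `π(x)`, the number of primes `≤ x`. -/
noncomputable def primePi (x : ℝ) : ℕ := (primesUpTo x).card

/-- `π(x; b, a)`, the number of primes `p ≤ x` with `p ≡ a (mod b)`. -/
noncomputable def primePiMod (x : ℝ) (b a : ℕ) : ℕ :=
  ((primesUpTo x).filter fun p => p % b = a % b).card

/-- `Δ(x; b, a) = π(x; b, a) - π(x)/φ(b)`. -/
noncomputable def chebErr (x : ℝ) (b a : ℕ) : ℝ :=
  (primePiMod x b a : ℝ) - (primePi x : ℝ) / (Nat.totient b : ℝ)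

open scoped ENNReal NNReal Nat

section DivisorBound

lemma natCast_add_one_le_mul_pow {b x : ℝ} (hb : 1 < b) (hbx : b ≤ x) (k : ℕ) :
    (k : ℝ) + 1 ≤ (1 + 1 / (b - 1)) * x ^ k := by
  have hb' : 0 < b - 1 := sub_pos.2 hb
  calc (k : ℝ) + 1 ≤ (1 + 1 / (b - 1)) * (1 + k * (b - 1)) := by
        have : (1 + 1 / (b - 1)) * (1 + k * (b - 1)) = k + 1 + (1 / (b - 1) + k * (b - 1)) := by
          field_simp
          ring
        rw [this]
        exact le_add_of_nonneg_right (by positivity)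
    _ ≤ (1 + 1 / (b - 1)) * x ^ k := by
        gcongr
        calc 1 + (k : ℝ) * (b - 1) ≤ (1 + (b - 1)) ^ k := one_add_mul_le_pow (by linarith) k
          _ ≤ x ^ k := by gcongr; linarith

lemma natCast_rpow_eq_prod_primeFactors {n : ℕ} (hn : n ≠ 0) (η : ℝ) :
    (n : ℝ) ^ η = ∏ p ∈ n.primeFactors, ((p : ℝ) ^ η) ^ n.factorization p := by
  conv_lhs => rw [Nat.prod_primeFactors_pow_factorization hn, Nat.cast_prod]
  rw [← Real.finsetProd_rpow _ _ fun _ _ ↦ by positivity]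
  refine Finset.prod_congr rfl fun p _ ↦ ?_
  rw [Nat.cast_pow, Real.rpow_pow_comm (by positivity)]

/- Only the primes `p ≤ 2 ^ (1 / η)` contribute a factor larger than `p ^ (η * k)`. -/
theorem exists_card_divisors_le_mul_rpow {η : ℝ} (hη : 0 < η) :
    ∃ C : ℝ, 0 < C ∧ ∀ n : ℕ, n ≠ 0 → (n.divisors.card : ℝ) ≤ C * (n : ℝ) ^ η := by
  obtain ⟨N, hN⟩ : ∃ N : ℕ, (2 : ℝ) ^ (1 / η) ≤ N := exists_nat_ge _
  have h2η : 1 < (2 : ℝ) ^ η := Real.one_lt_rpow one_lt_two hη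
  set K : ℝ := 1 + 1 / ((2 : ℝ) ^ η - 1)
  have hK : 1 ≤ K := le_add_of_nonneg_right (one_div_nonneg.2 (sub_pos.2 h2η).le)
  refine ⟨K ^ (N + 1), by positivity, fun n hn ↦ ?_⟩
  have local_le : ∀ p ∈ n.primeFactors, (n.factorization p : ℝ) + 1 ≤
      (if p ≤ N then K else 1) * ((p : ℝ) ^ η) ^ n.factorization p := by
    intro p hp
    split_ifs with hpN
    · refine natCast_add_one_le_mul_pow h2η ?_ _
      gcongr
      exact_mod_cast (Nat.prime_of_mem_primeFactors hp).two_le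
    · have hp2 : 2 ≤ (p : ℝ) ^ η := by
        rw [← Real.rpow_inv_le_iff_of_pos (by norm_num) (by positivity) hη, ← one_div]
        exact hN.trans (by exact_mod_cast (not_le.1 hpN).le)
      rw [one_mul]
      calc (n.factorization p : ℝ) + 1 ≤ 2 ^ n.factorization p := by
            exact_mod_cast Nat.lt_two_pow_self
        _ ≤ _ := by gcongr
  have small_primes_le : ∏ p ∈ n.primeFactors, (if p ≤ N then K else 1) ≤ K ^ (N + 1) := by
    rw [← Finset.prod_filter, Finset.prod_const]
    refine pow_le_pow_right₀ hK ?_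
    calc (n.primeFactors.filter (· ≤ N)).card ≤ (Finset.range (N + 1)).card :=
          Finset.card_le_card fun p hp ↦
            Finset.mem_range_succ_iff.2 (Finset.mem_filter.1 hp).2
      _ = N + 1 := Finset.card_range _
  calc (n.divisors.card : ℝ) = ∏ p ∈ n.primeFactors, ((n.factorization p : ℝ) + 1) := by
        rw [Nat.card_divisors hn]
        push_cast
        rfl
    _ ≤ ∏ p ∈ n.primeFactors,
          (if p ≤ N then K else 1) * ((p : ℝ) ^ η) ^ n.factorization p :=
        Finset.prod_le_prod (fun _ _ ↦ by positivity) local_le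
    _ ≤ K ^ (N + 1) * (n : ℝ) ^ η := by
        rw [Finset.prod_mul_distrib, ← natCast_rpow_eq_prod_primeFactors hn]
        gcongr

end DivisorBound

section Totient

lemma le_card_divisors_mul_totient (n : ℕ) : n ≤ n.divisors.card * φ n := by
  obtain rfl | hn := eq_or_ne n 0
  · exact Nat.zero_le _
  calc n = ∑ d ∈ n.divisors, φ d := (Nat.sum_totient n).symm
    _ ≤ n.divisors.card • φ n := Finset.sum_le_card_nsmul _ _ _ fun d hd ↦
        Nat.le_of_dvd (Nat.totient_pos.2 hn.bot_lt)
          (Nat.totient_dvd_of_dvd (Nat.dvd_of_mem_divisors hd))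

theorem exists_inv_totient_le_mul_rpow {η : ℝ} (hη : 0 < η) :
    ∃ C : ℝ, 0 < C ∧ ∀ n : ℕ, n ≠ 0 → (φ n : ℝ)⁻¹ ≤ C * (n : ℝ) ^ (η - 1) := by
  obtain ⟨C, hC, hcard⟩ := exists_card_divisors_le_mul_rpow hη
  refine ⟨C, hC, fun n hn ↦ ?_⟩
  have hn' : (0 : ℝ) < n := by exact_mod_cast hn.bot_lt
  have hφ : (0 : ℝ) < φ n := by exact_mod_cast Nat.totient_pos.2 hn.bot_lt
  rw [Real.rpow_sub_one hn'.ne', mul_div_assoc', inv_le_iff_one_le_mul₀ hφ, div_mul_eq_mul_div,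
    one_le_div hn']
  calc (n : ℝ) ≤ n.divisors.card * φ n := by exact_mod_cast le_card_divisors_mul_totient n
    _ ≤ C * (n : ℝ) ^ η * φ n := by gcongr; exact hcard n hn

lemma totient_gcd_mul_totient_lcm {m : ℕ} (hm : m ≠ 0) (n : ℕ) :
    φ (m.gcd n) * φ (m.lcm n) = φ m * φ n := by
  have hdvd : m.gcd n ∣ m.lcm n := (Nat.gcd_dvd_left m n).trans (Nat.dvd_lcm_left m n)
  have h := Nat.totient_gcd_mul_totient_mul (m.gcd n) (m.lcm n)
  rw [Nat.gcd_mul_lcm, Nat.gcd_eq_left hdvd, Nat.totient_gcd_mul_totient_mul] at h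
  exact (Nat.eq_of_mul_eq_mul_right (Nat.gcd_pos_of_pos_left n hm.bot_lt) h).symm

lemma totient_mul_totient_le_gcd_mul_totient_lcm (m n : ℕ) :
    φ m * φ n ≤ m.gcd n * φ (m.lcm n) := by
  obtain rfl | hm := eq_or_ne m 0
  · simp
  rw [← totient_gcd_mul_totient_lcm hm]
  exact Nat.mul_le_mul_right _ (Nat.totient_le _)

end Totient

section Rho

lemma rho_eq_sum_piAntidiag (lam n : ℕ) :
    rho lam n = ∑ k ∈ Finset.piAntidiag (Finset.univ : Finset n.primeFactors) lam,
      (Nat.multinomial Finset.univ k : ℝ) * ∏ p : n.primeFactors,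
        ((n.factorization p : ℝ) ^ k p - ((n.factorization p : ℝ) - 1) ^ k p) *
          Real.log (p : ℕ) ^ k p := by
  have hindex : ((Fintype.piFinset fun _ : n.primeFactors ↦ Finset.range (lam + 1)).filter
      fun k ↦ ∑ p, k p = lam) = Finset.piAntidiag Finset.univ lam := by
    ext k
    simp only [Finset.mem_filter, Fintype.mem_piFinset, Finset.mem_range, Finset.mem_piAntidiag,
      Finset.mem_univ, implies_true, and_true, and_iff_right_iff_imp]
    rintro rfl p
    exact Nat.lt_succ_of_le (Finset.single_le_sum (fun _ _ ↦ Nat.zero_le _) (Finset.mem_univ p))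
  rw [rho, hindex, Finset.mul_sum]
  refine Finset.sum_congr rfl fun k hk ↦ ?_
  rw [Finset.prod_div_distrib, mul_div_assoc', mul_div_right_comm]
  congr 1
  rw [div_eq_iff (by positivity), ← (Finset.mem_piAntidiag.1 hk).1, ← Nat.multinomial_spec]
  push_cast
  ring

lemma one_le_factorization {n p : ℕ} (hp : p ∈ n.primeFactors) :
    (1 : ℝ) ≤ n.factorization p := by
  exact_mod_cast ((Nat.prime_of_mem_primeFactors hp).dvd_iff_one_le_factorization
    (Nat.mem_primeFactors.1 hp).2.2).1 (Nat.dvd_of_mem_primeFactors hp)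

lemma rho_local_factor_nonneg {n p : ℕ} (hp : p ∈ n.primeFactors) (k : ℕ) :
    0 ≤ ((n.factorization p : ℝ) ^ k - ((n.factorization p : ℝ) - 1) ^ k) * Real.log p ^ k := by
  have h := one_le_factorization hp
  refine mul_nonneg (sub_nonneg.2 ?_) (pow_nonneg (Real.log_natCast_nonneg p) k)
  exact pow_le_pow_left₀ (by linarith) (by linarith) k

lemma rho_nonneg (lam n : ℕ) : 0 ≤ rho lam n := by
  rw [rho_eq_sum_piAntidiag]
  exact Finset.sum_nonneg fun k _ ↦ mul_nonneg (Nat.cast_nonneg _)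
    (Finset.prod_nonneg fun p _ ↦ rho_local_factor_nonneg p.2 (k p))

/- Dropping the terms `(h - 1) ^ k`, the multinomial theorem collapses the sum to
`(∑ h * log p) ^ λ`. -/
theorem rho_le_log_pow (lam n : ℕ) : rho lam n ≤ Real.log n ^ lam := by
  have hlog : Real.log n = ∑ p : n.primeFactors, (n.factorization p : ℝ) * Real.log (p : ℕ) := by
    rw [Real.log_nat_eq_sum_factorization, Finsupp.sum, Nat.support_factorization,
      ← Finset.sum_coe_sort]
  rw [rho_eq_sum_piAntidiag, hlog, Finset.sum_pow_eq_sum_piAntidiag]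
  refine Finset.sum_le_sum fun k _ ↦ mul_le_mul_of_nonneg_left (Finset.prod_le_prod
    (fun p _ ↦ rho_local_factor_nonneg p.2 (k p)) fun p _ ↦ ?_) (Nat.cast_nonneg _)
  have h := one_le_factorization p.2
  rw [mul_pow]
  gcongr
  exact sub_le_self _ (pow_nonneg (by linarith) _)

theorem exists_rho_le_mul_rpow {lam : ℕ} (hlam : 0 < lam) {η : ℝ} (hη : 0 < η) :
    ∃ C : ℝ, 0 < C ∧ ∀ n : ℕ, rho lam n ≤ C * (n : ℝ) ^ η := by
  have hlam' : (0 : ℝ) < lam := by exact_mod_cast hlam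
  refine ⟨((η / lam) ^ lam)⁻¹, by positivity, fun n ↦ (rho_le_log_pow lam n).trans ?_⟩
  calc Real.log n ^ lam ≤ ((n : ℝ) ^ (η / lam) / (η / lam)) ^ lam :=
        pow_le_pow_left₀ (Real.log_natCast_nonneg n)
          (Real.log_natCast_le_rpow_div n (by positivity)) lam
    _ = ((η / lam) ^ lam)⁻¹ * (n : ℝ) ^ η := by
        rw [div_pow, ← Real.rpow_mul_natCast n.cast_nonneg, div_mul_cancel₀ _ hlam'.ne', mul_comm,
          div_eq_mul_inv, mul_comm]

lemma exists_composition_of_rho_ne_zero {lam n : ℕ} (h : rho lam n ≠ 0) :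
    ∃ k : n.primeFactors → ℕ, ∑ p, k p = lam ∧ ∀ p, k p ≠ 0 := by
  rw [rho_eq_sum_piAntidiag] at h
  obtain ⟨k, hk, hne⟩ := Finset.exists_ne_zero_of_sum_ne_zero h
  refine ⟨k, (Finset.mem_piAntidiag.1 hk).1, fun p hp ↦ ?_⟩
  refine Finset.prod_ne_zero_iff.1 (right_ne_zero_of_mul hne) p (Finset.mem_univ p) ?_
  simp only [hp, pow_zero, sub_self, zero_mul]

lemma card_primeFactors_le_of_rho_ne_zero {lam n : ℕ} (h : rho lam n ≠ 0) :
    n.primeFactors.card ≤ lam := by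
  obtain ⟨k, rfl, hk⟩ := exists_composition_of_rho_ne_zero h
  calc n.primeFactors.card = ∑ _p : n.primeFactors, 1 := by simp
    _ ≤ ∑ p, k p := Finset.sum_le_sum fun p _ ↦ Nat.one_le_iff_ne_zero.2 (hk p)

lemma primeFactors_nonempty_of_rho_ne_zero {lam n : ℕ} (hlam : 0 < lam) (h : rho lam n ≠ 0) :
    n.primeFactors.Nonempty := by
  obtain ⟨k, hsum, -⟩ := exists_composition_of_rho_ne_zero h
  obtain ⟨p, -, -⟩ := Finset.exists_ne_zero_of_sum_ne_zero (hsum.trans_ne hlam.ne')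
  exact ⟨p, p.2⟩

end Rho

section Lucas

/-- `u` is the Lucas sequence of the first kind with characteristic polynomial `x² - a x - b`. -/
structure IsLucasSeq (a b : ℤ) (u : ℕ → ℤ) : Prop where
  zero : u 0 = 0
  one : u 1 = 1
  add_two : ∀ n, u (n + 2) = a * u (n + 1) + b * u n

lemma exists_ne_quadratic_roots {K : Type*} [Field K] [IsAlgClosed K] {a b : K}
    (hΔ : a ^ 2 + 4 * b ≠ 0) :
    ∃ α β : K, α ^ 2 = a * α + b ∧ β ^ 2 = a * β + b ∧ α ≠ β := by
  obtain ⟨α, hα⟩ := IsAlgClosed.exists_root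
    (Polynomial.C 1 * Polynomial.X ^ 2 + Polynomial.C (-a) * Polynomial.X + Polynomial.C (-b))
    (by rw [Polynomial.degree_quadratic one_ne_zero]; exact two_ne_zero)
  simp only [Polynomial.IsRoot.def, Polynomial.eval_add, Polynomial.eval_mul, Polynomial.eval_C,
    Polynomial.eval_pow, Polynomial.eval_X] at hα
  refine ⟨α, a - α, by linear_combination hα, by linear_combination hα, fun h ↦ hΔ ?_⟩
  linear_combination (2 * α - a) * h - 4 * hα

lemma ne_zero_of_sq_eq_mul_add {R : Type*} [Ring R] {a b x : R} (hb : b ≠ 0)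
    (hx : x ^ 2 = a * x + b) : x ≠ 0 := by
  rintro rfl
  exact hb (by simpa using hx.symm)

lemma isOfFinOrder_of_isAlgebraic (F : Type*) {K : Type*} [Field F] [Finite F] [Field K]
    [Algebra F K] {x : K} (hx : IsAlgebraic F x) (hx₀ : x ≠ 0) : IsOfFinOrder x := by
  have := IntermediateField.adjoin.finiteDimensional hx.isIntegral
  have : Finite (IntermediateField.adjoin F {x}) := Module.finite_of_finite F
  have hgen : IsOfFinOrder (IntermediateField.AdjoinSimple.gen F x) := by
    refine isOfFinOrder_iff_isUnit.2 (isUnit_iff_ne_zero.2 fun h ↦ hx₀ ?_)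
    rw [← IntermediateField.AdjoinSimple.coe_gen F x, h, ZeroMemClass.coe_zero]
  rw [← IntermediateField.AdjoinSimple.algebraMap_gen F x]
  exact (algebraMap (IntermediateField.adjoin F {x}) K : _ →* K).isOfFinOrder hgen

lemma coprime_orderOf_of_charP {R : Type*} [CommRing R] [IsReduced R] {p : ℕ} [hp : Fact p.Prime]
    [CharP R p] {x : R} (hx : IsOfFinOrder x) : p.Coprime (orderOf x) := by
  refine (hp.out.coprime_iff_not_dvd).2 fun ⟨m, hm⟩ ↦ ?_
  have : ExpChar R p := .prime hp.out
  have hpow : x ^ m = 1 := by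
    rw [← ExpChar.pow_prime_pow_mul_eq_one_iff p 1 m x, pow_one, ← hm, pow_orderOf_eq_one]
  have hpos : 0 < p * m := hm ▸ hx.orderOf_pos
  have hle : p * m ≤ m :=
    Nat.le_of_dvd (Nat.pos_of_mul_pos_left hpos) (hm ▸ orderOf_dvd_of_pow_eq_one hpow)
  nlinarith [hp.out.two_le]

namespace IsLucasSeq

variable {a b : ℤ} {u : ℕ → ℤ}

lemma binet (hu : IsLucasSeq a b u) {R : Type*} [CommRing R] {α β : R}
    (hα : α ^ 2 = a * α + b) (hβ : β ^ 2 = a * β + b) (n : ℕ) :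
    (u n : R) * (α - β) = α ^ n - β ^ n := by
  induction n using Nat.twoStepInduction with
  | zero => simp [hu.zero]
  | one => simp [hu.one]
  | more n h₁ h₂ =>
    rw [hu.add_two]
    push_cast
    linear_combination a * h₂ + b * h₁ - α ^ n * hα + β ^ n * hβ

lemma cast_eq_zero_iff (hu : IsLucasSeq a b u) {K : Type*} [Field K] (hb : (b : K) ≠ 0) {α β : K}
    (hα : α ^ 2 = a * α + b) (hβ : β ^ 2 = a * β + b) (hne : α ≠ β) (n : ℕ) :
    (u n : K) = 0 ↔ (α / β) ^ n = 1 := by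
  rw [div_pow, div_eq_one_iff_eq (pow_ne_zero n (ne_zero_of_sq_eq_mul_add hb hβ)),
    ← sub_eq_zero (a := α ^ n), ← hu.binet hα hβ, mul_eq_zero, or_iff_left (sub_ne_zero.2 hne)]

lemma ne_zero (hu : IsLucasSeq a b u) (hb : b ≠ 0) (hΔ : a ^ 2 + 4 * b ≠ 0)
    (hnd : ∀ α β : ℂ, α ^ 2 = a * α + b → β ^ 2 = a * β + b → α ≠ β →
      ∀ k : ℕ, 0 < k → (α / β) ^ k ≠ 1) {n : ℕ} (hn : 0 < n) : u n ≠ 0 := by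
  obtain ⟨α, β, hα, hβ, hne⟩ :=
    exists_ne_quadratic_roots (K := ℂ) (a := a) (b := b) (by exact_mod_cast hΔ)
  have h := (hu.cast_eq_zero_iff (Int.cast_ne_zero.2 hb) hα hβ hne n).not.2 (hnd α β hα hβ hne n hn)
  exact_mod_cast h

lemma exists_dvd_iff (hu : IsLucasSeq a b u) {p : ℕ} (hp : p.Prime)
    (hpD : ¬(p : ℤ) ∣ b * (a ^ 2 + 4 * b)) :
    ∃ z : ℕ, 0 < z ∧ p.Coprime z ∧ ∀ m, (p : ℤ) ∣ u m ↔ z ∣ m := by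
  have : Fact p.Prime := ⟨hp⟩
  have hD : (b : AlgebraicClosure (ZMod p)) * (a ^ 2 + 4 * b) ≠ 0 := by
    rw [← CharP.intCast_eq_zero_iff (AlgebraicClosure (ZMod p))] at hpD
    push_cast at hpD
    exact hpD
  have hb := left_ne_zero_of_mul hD
  obtain ⟨α, β, hα, hβ, hne⟩ := exists_ne_quadratic_roots (right_ne_zero_of_mul hD)
  have hfin : IsOfFinOrder (α / β) := isOfFinOrder_of_isAlgebraic (ZMod p)
    (Algebra.IsAlgebraic.isAlgebraic _)
    (div_ne_zero (ne_zero_of_sq_eq_mul_add hb hα) (ne_zero_of_sq_eq_mul_add hb hβ))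
  refine ⟨orderOf (α / β), hfin.orderOf_pos, coprime_orderOf_of_charP hfin, fun m ↦ ?_⟩
  rw [← CharP.intCast_eq_zero_iff (AlgebraicClosure (ZMod p)),
    hu.cast_eq_zero_iff hb hα hβ hne, orderOf_dvd_iff_pow_eq_one]

lemma natAbs_le (hu : IsLucasSeq a b u) (n : ℕ) :
    (u n).natAbs ≤ (a.natAbs + b.natAbs + 1) ^ n := by
  induction n using Nat.twoStepInduction with
  | zero => simp [hu.zero]
  | one => simp [hu.one]
  | more n h₁ h₂ =>
    set B := a.natAbs + b.natAbs + 1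
    have hB : B ^ n ≤ B ^ (n + 1) := Nat.pow_le_pow_right (by lia) (by lia)
    calc (u (n + 2)).natAbs ≤ (a * u (n + 1)).natAbs + (b * u n).natAbs :=
          hu.add_two n ▸ Int.natAbs_add_le _ _
      _ = a.natAbs * (u (n + 1)).natAbs + b.natAbs * (u n).natAbs := by
          rw [Int.natAbs_mul, Int.natAbs_mul]
      _ ≤ a.natAbs * B ^ (n + 1) + b.natAbs * B ^ (n + 1) := by
          gcongr
          exact h₁.trans hB
      _ ≤ B ^ (n + 2) := by
          rw [← add_mul, pow_succ' _ (n + 1)]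
          gcongr
          exact Nat.le_succ _

end IsLucasSeq

lemma dvd_apply_zu {u : ℕ → ℤ} {n : ℕ} (hn : zu u n ≠ 0) : (n : ℤ) ∣ u (zu u n) :=
  (Nat.sInf_mem (Nat.nonempty_of_pos_sInf hn.bot_lt)).2

lemma zu_eq_of_forall_dvd_iff {u : ℕ → ℤ} {n z : ℕ} (hz : 0 < z)
    (h : ∀ m, (n : ℤ) ∣ u m ↔ z ∣ m) : zu u n = z :=
  IsLeast.csInf_eq ⟨⟨hz, (h z).2 dvd_rfl⟩, fun m ⟨hm, hdvd⟩ ↦ Nat.le_of_dvd hm ((h m).1 hdvd)⟩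

lemma two_pow_card_primeFactors_le {n : ℕ} (hn : n ≠ 0) : 2 ^ n.primeFactors.card ≤ n :=
  calc 2 ^ n.primeFactors.card ≤ ∏ p ∈ n.primeFactors, p :=
        Finset.pow_card_le_prod _ _ _ fun _ hp ↦ (Nat.prime_of_mem_primeFactors hp).two_le
    _ ≤ n := Nat.le_of_dvd hn.bot_lt (Nat.prod_primeFactors_dvd n)

open Classical in
/-- The rank of appearance of a prime `p` in the Lucas sequence `u` with parameters `a`, `b`,
replaced by `1` at the finitely many primes dividing `b (a² + 4b)`. At every prime it is coprime
to `p` and divides the rank of appearance of each multiple of `p`. -/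
noncomputable def tameRank (a b : ℤ) (u : ℕ → ℤ) (p : ℕ) : ℕ :=
  if (p : ℤ) ∣ b * (a ^ 2 + 4 * b) then 1 else zu u p

namespace IsLucasSeq

variable {a b : ℤ} {u : ℕ → ℤ} {p : ℕ}

lemma tameRank_spec (hu : IsLucasSeq a b u) (hp : p.Prime) :
    0 < tameRank a b u p ∧ p.Coprime (tameRank a b u p) ∧
      (∀ m, (p : ℤ) ∣ u m → tameRank a b u p ∣ m) ∧
      (p : ℤ) ∣ u (tameRank a b u p) * (b * (a ^ 2 + 4 * b)) := by
  rw [tameRank]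
  split_ifs with hpD
  · exact ⟨one_pos, Nat.coprime_one_right p, fun m _ ↦ one_dvd m, hpD.mul_left _⟩
  · obtain ⟨z, hz, hcop, hdvd⟩ := hu.exists_dvd_iff hp hpD
    rw [zu_eq_of_forall_dvd_iff hz hdvd]
    exact ⟨hz, hcop, fun m ↦ (hdvd m).1, ((hdvd z).2 dvd_rfl).mul_right _⟩

lemma tameRank_dvd_zu (hu : IsLucasSeq a b u) (hp : p.Prime) {n : ℕ} (hpn : p ∣ n)
    (hn : zu u n ≠ 0) : tameRank a b u p ∣ zu u n :=
  (hu.tameRank_spec hp).2.2.1 _ ((Int.natCast_dvd_natCast.2 hpn).trans (dvd_apply_zu hn))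

/- Such primes divide the nonzero integer `u t * b * (a² + 4b)`, whose logarithm is `O(t)`. -/
lemma exists_encard_setOf_tameRank_eq_le (hu : IsLucasSeq a b u) (hb : b ≠ 0)
    (hΔ : a ^ 2 + 4 * b ≠ 0) (hne : ∀ n, 0 < n → u n ≠ 0) :
    ∃ K : ℕ, ∀ t, {p : Nat.Primes | tameRank a b u p = t}.encard ≤ (K * t : ℕ) := by
  set D := b * (a ^ 2 + 4 * b)
  refine ⟨a.natAbs + b.natAbs + 1 + D.natAbs, fun t ↦ ?_⟩
  obtain rfl | ht := t.eq_zero_or_pos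
  · rw [mul_zero, Nat.cast_zero, nonpos_iff_eq_zero, Set.encard_eq_zero]
    exact Set.eq_empty_of_forall_notMem fun p ↦ (hu.tameRank_spec p.2).1.ne'
  set N := (u t * D).natAbs
  have hN : N ≠ 0 := Int.natAbs_ne_zero.2 (mul_ne_zero (hne t ht) (mul_ne_zero hb hΔ))
  have hNle : N ≤ 2 ^ ((a.natAbs + b.natAbs + 1 + D.natAbs) * t) := by
    calc N = (u t).natAbs * D.natAbs := Int.natAbs_mul _ _
      _ ≤ (a.natAbs + b.natAbs + 1) ^ t * 2 ^ D.natAbs :=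
          Nat.mul_le_mul (hu.natAbs_le t) Nat.lt_two_pow_self.le
      _ ≤ (2 ^ (a.natAbs + b.natAbs + 1)) ^ t * (2 ^ D.natAbs) ^ t :=
          Nat.mul_le_mul (Nat.pow_le_pow_left Nat.lt_two_pow_self.le _) (Nat.le_self_pow ht.ne' _)
      _ = 2 ^ ((a.natAbs + b.natAbs + 1 + D.natAbs) * t) := by
          rw [← pow_mul, ← pow_mul, ← pow_add, ← add_mul]
  have hmaps : Set.MapsTo ((↑) : Nat.Primes → ℕ) {p | tameRank a b u p = t} N.primeFactors := by
    rintro p rfl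
    exact Nat.mem_primeFactors.2 ⟨p.2, Int.natCast_dvd.1 (hu.tameRank_spec p.2).2.2.2, hN⟩
  calc {p : Nat.Primes | tameRank a b u p = t}.encard ≤ (N.primeFactors : Set ℕ).encard :=
        Set.encard_le_encard_of_injOn hmaps Subtype.val_injective.injOn
    _ = N.primeFactors.card := Set.encard_coe_eq_coe_finsetCard _
    _ ≤ _ := by
        exact_mod_cast (Nat.pow_le_pow_iff_right one_lt_two).1
          ((two_pow_card_primeFactors_le hN).trans hNle)

end IsLucasSeq

end Lucas

section SmoothSums

lemma tsum_subtype_le_tsum_mul_tsum {M : Type*} [Mul M] {X S T : Set M} {f g h : M → ℝ≥0∞}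
    (H : ∀ x ∈ X, ∃ a ∈ S, ∃ b ∈ T, a * b = x ∧ f x ≤ g a * h b) :
    ∑' x : X, f x ≤ (∑' a : S, g a) * ∑' b : T, h b := by
  choose! a ha b hb hmul hle using H
  let split (x : X) : S × T := (⟨a x, ha x x.2⟩, ⟨b x, hb x x.2⟩)
  have split_injective : Function.Injective split := fun x y hxy ↦ by
    have hfst : a x = a y := congrArg (fun t : S × T ↦ (t.1 : M)) hxy
    have hsnd : b x = b y := congrArg (fun t : S × T ↦ (t.2 : M)) hxy
    exact Subtype.ext (by rw [← hmul x x.2, ← hmul y y.2, hfst, hsnd])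
  calc ∑' x : X, f x ≤ ∑' x : X, g (split x).1 * h (split x).2 :=
        ENNReal.tsum_le_tsum fun x ↦ hle x x.2
    _ ≤ ∑' t : S × T, g t.1 * h t.2 :=
        ENNReal.tsum_comp_le_tsum_of_injective split_injective fun t : S × T ↦ g t.1 * h t.2
    _ = (∑' a : S, g a) * ∑' b : T, h b := by
        rw [ENNReal.tsum_prod (f := fun (a : S) (b : T) ↦ g a * h b), ← ENNReal.tsum_mul_right]
        simp only [ENNReal.tsum_mul_left]

lemma natCast_mul_rpow (m n : ℕ) (x : ℝ) :
    ((m * n : ℕ) : ℝ≥0∞) ^ x = (m : ℝ≥0∞) ^ x * (n : ℝ≥0∞) ^ x := by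
  rw [Nat.cast_mul,
    ENNReal.mul_rpow_of_ne_top (ENNReal.natCast_ne_top m) (ENNReal.natCast_ne_top n)]

lemma natCast_rpow_add {n : ℕ} (hn : n ≠ 0) (x y : ℝ) :
    (n : ℝ≥0∞) ^ (x + y) = (n : ℝ≥0∞) ^ x * (n : ℝ≥0∞) ^ y :=
  ENNReal.rpow_add x y (Nat.cast_ne_zero.2 hn) (ENNReal.natCast_ne_top n)

/-- The positive integers with at most `j` distinct prime factors, all of them at most `P`. -/
def smoothOmegaLE (j P : ℕ) : Set ℕ :=
  {m ∈ (P + 1).smoothNumbers | m.primeFactors.card ≤ j}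

lemma mem_smoothOmegaLE_of_dvd {j P m d : ℕ} (hm : m ∈ smoothOmegaLE j P) (hd : d ∣ m) :
    d ∈ smoothOmegaLE j P :=
  ⟨Nat.mem_smoothNumbers_of_dvd hm.1 hd,
    (Finset.card_le_card (Nat.primeFactors_mono hd hm.1.1)).trans hm.2⟩

lemma smoothOmegaLE_zero_subset (P : ℕ) : smoothOmegaLE 0 P ⊆ {1} := fun m hm ↦ by
  have hm' := Finset.card_eq_zero.1 (Nat.le_zero.1 hm.2)
  exact (Nat.primeFactors_eq_empty.1 hm').resolve_left hm.1.1

lemma exists_eq_pow_succ_mul_of_mem_smoothOmegaLE {j P n q : ℕ}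
    (hn : n ∈ smoothOmegaLE (j + 1) P) (hq : q.Prime) (hqn : q ∣ n) :
    ∃ k, ∃ m ∈ smoothOmegaLE j P, q ^ (k + 1) * m = n := by
  have hn₀ : n ≠ 0 := hn.1.1
  refine ⟨n.factorization q - 1, ordCompl[q] n,
    ⟨Nat.mem_smoothNumbers_of_dvd hn.1 (Nat.ordCompl_dvd n q), ?_⟩, ?_⟩
  · have hsub : (ordCompl[q] n).primeFactors ⊆ n.primeFactors.erase q := fun r hr ↦ by
      refine Finset.mem_erase.2 ⟨?_, Nat.primeFactors_mono (Nat.ordCompl_dvd n q) hn₀ hr⟩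
      rintro rfl
      exact Nat.not_dvd_ordCompl hq hn₀ (Nat.dvd_of_mem_primeFactors hr)
    have hcard := Finset.card_le_card hsub
    rw [Finset.card_erase_of_mem (Nat.mem_primeFactors.2 ⟨hq, hqn, hn₀⟩)] at hcard
    have := hn.2
    lia
  · rw [Nat.sub_add_cancel (hq.factorization_pos_of_dvd hn₀ hqn)]
    exact Nat.ordProj_mul_ordCompl_eq_self n q

lemma tsum_prime_pow_rpow_le {s : ℝ} (hs : 0 ≤ s) {q : ℕ} (hq : 2 ≤ q) :
    ∑' k : ℕ, ((q ^ (k + 1) : ℕ) : ℝ≥0∞) ^ (-s) ≤ (1 - 2 ^ (-s))⁻¹ * (q : ℝ≥0∞) ^ (-s) := by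
  have hle : (q : ℝ≥0∞) ^ (-s) ≤ 2 ^ (-s) := by
    rw [ENNReal.rpow_neg, ENNReal.rpow_neg]
    gcongr
    exact_mod_cast hq
  calc ∑' k : ℕ, ((q ^ (k + 1) : ℕ) : ℝ≥0∞) ^ (-s)
      = ∑' k : ℕ, ((q : ℝ≥0∞) ^ (-s)) ^ (k + 1) := by
        simp only [Nat.cast_pow, ← ENNReal.rpow_natCast, ← ENNReal.rpow_mul, mul_comm]
    _ = (1 - (q : ℝ≥0∞) ^ (-s))⁻¹ * (q : ℝ≥0∞) ^ (-s) := by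
        rw [ENNReal.tsum_geometric_add_one, mul_comm]
    _ ≤ (1 - 2 ^ (-s))⁻¹ * (q : ℝ≥0∞) ^ (-s) := by gcongr

lemma one_sub_two_rpow_neg_inv_ne_top {s : ℝ} (hs : 0 < s) :
    (1 - (2 : ℝ≥0∞) ^ (-s))⁻¹ ≠ ⊤ := by
  refine ENNReal.inv_ne_top.2 (tsub_pos_of_lt ?_).ne'
  exact ENNReal.rpow_lt_one_of_one_lt_of_neg (by norm_num) (by linarith)

lemma tsum_primes_rpow_ne_top {s : ℝ} (hs : 1 < s) :
    ∑' q : Nat.Primes, ((q : ℕ) : ℝ≥0∞) ^ (-s) ≠ ⊤ := by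
  have h := (Nat.Primes.summable_rpow.2 (neg_lt_neg hs)).tsum_ofReal_ne_top
  refine ne_of_eq_of_ne (tsum_congr fun q ↦ ?_) h
  rw [← ENNReal.ofReal_rpow_of_pos (by exact_mod_cast q.2.pos), ENNReal.ofReal_natCast]

lemma tsum_iUnion_singleton_le {X ι : Type*} (f : X → ℝ≥0∞) (g : ι → X) :
    ∑' x : ⋃ i, {g i}, f x ≤ ∑' i, f (g i) :=
  (ENNReal.tsum_iUnion_le_tsum f _).trans_eq (tsum_congr fun i ↦ tsum_singleton (g i) f)

/-- The prime powers `q ^ k` with `q ≤ P`, including `1`. -/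
def smoothPrimePows (P : ℕ) : Set ℕ :=
  {1} ∪ ⋃ q : {q : Nat.Primes // (q : ℕ) ≤ P}, ⋃ k : ℕ, {(q : ℕ) ^ (k + 1)}

lemma exists_tsum_smoothPrimePows_le {s κ : ℝ} (hs : 0 < s) (hκ : 0 < κ) (hsκ : 1 < s + κ) :
    ∃ C : ℝ≥0, ∀ P : ℕ, P ≠ 0 →
      ∑' m : smoothPrimePows P, ((m : ℕ) : ℝ≥0∞) ^ (-s) ≤ C * (P : ℝ≥0∞) ^ κ := by
  set A : ℝ≥0∞ := (1 - 2 ^ (-s))⁻¹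
  set B : ℝ≥0∞ := ∑' q : Nat.Primes, ((q : ℕ) : ℝ≥0∞) ^ (-(s + κ))
  have hAB : 1 + A * B ≠ ⊤ := ENNReal.add_ne_top.2 ⟨ENNReal.one_ne_top,
    ENNReal.mul_ne_top (one_sub_two_rpow_neg_inv_ne_top hs) (tsum_primes_rpow_ne_top hsκ)⟩
  refine ⟨(1 + A * B).toNNReal, fun P hP ↦ ?_⟩
  rw [ENNReal.coe_toNNReal hAB]
  have one_le : 1 ≤ (P : ℝ≥0∞) ^ κ :=
    ENNReal.one_le_rpow (by exact_mod_cast Nat.one_le_iff_ne_zero.2 hP) hκ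
  have term_le (q : {q : Nat.Primes // (q : ℕ) ≤ P}) :
      (q : ℝ≥0∞) ^ (-s) ≤ (P : ℝ≥0∞) ^ κ * (q : ℝ≥0∞) ^ (-(s + κ)) := by
    rw [show -s = κ + -(s + κ) by ring, natCast_rpow_add q.1.2.ne_zero]
    gcongr
    exact q.2
  calc ∑' m : smoothPrimePows P, ((m : ℕ) : ℝ≥0∞) ^ (-s)
      ≤ 1 + ∑' q : {q : Nat.Primes // (q : ℕ) ≤ P}, ∑' k : ℕ,
          (((q : ℕ) ^ (k + 1) : ℕ) : ℝ≥0∞) ^ (-s) := by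
        let f (m : ℕ) : ℝ≥0∞ := (m : ℝ≥0∞) ^ (-s)
        refine (ENNReal.tsum_union_le f _ _).trans (add_le_add ?_ ?_)
        · exact ((tsum_singleton 1 f).trans (by simp [f])).le
        · exact (ENNReal.tsum_iUnion_le_tsum f _).trans
            (ENNReal.tsum_le_tsum fun q ↦ tsum_iUnion_singleton_le f _)
    _ ≤ 1 + ∑' q : {q : Nat.Primes // (q : ℕ) ≤ P},
          A * ((P : ℝ≥0∞) ^ κ * (q : ℝ≥0∞) ^ (-(s + κ))) := by
        gcongr with q
        exact (tsum_prime_pow_rpow_le hs.le q.1.2.two_le).trans (by gcongr; exact term_le q)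
    _ ≤ 1 + A * ((P : ℝ≥0∞) ^ κ * B) := by
        rw [ENNReal.tsum_mul_left, ENNReal.tsum_mul_left]
        gcongr
        exact ENNReal.tsum_comp_le_tsum_of_injective Subtype.val_injective
          fun q : Nat.Primes ↦ ((q : ℕ) : ℝ≥0∞) ^ (-(s + κ))
    _ ≤ (1 + A * B) * (P : ℝ≥0∞) ^ κ := by
        rw [add_mul, one_mul, mul_assoc, mul_comm B]
        gcongr

theorem exists_tsum_smoothOmegaLE_le {s κ : ℝ} (hs : 0 < s) (hκ : 0 < κ) (hsκ : 1 < s + κ)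
    (j : ℕ) :
    ∃ C : ℝ≥0, ∀ P : ℕ, P ≠ 0 →
      ∑' m : smoothOmegaLE j P, ((m : ℕ) : ℝ≥0∞) ^ (-s) ≤ C * (P : ℝ≥0∞) ^ (κ * j) := by
  obtain ⟨C, hC⟩ := exists_tsum_smoothPrimePows_le hs hκ hsκ
  refine ⟨C ^ j, fun P hP ↦ ?_⟩
  rw [ENNReal.coe_pow, ENNReal.rpow_mul_natCast, ← mul_pow]
  let f (m : ℕ) : ℝ≥0∞ := (m : ℝ≥0∞) ^ (-s)
  induction j with
  | zero =>
    calc ∑' m : smoothOmegaLE 0 P, f m ≤ ∑' m : ({1} : Set ℕ), f m :=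
          ENNReal.tsum_mono_subtype f (smoothOmegaLE_zero_subset P)
      _ = (C * (P : ℝ≥0∞) ^ κ) ^ 0 := (tsum_singleton 1 f).trans (by simp [f])
  | succ j ih =>
    have exists_mul_eq : ∀ n ∈ smoothOmegaLE (j + 1) P,
        ∃ a ∈ smoothPrimePows P, ∃ b ∈ smoothOmegaLE j P, a * b = n := fun n hn ↦ by
      obtain rfl | hn₁ := eq_or_ne n 1
      · exact ⟨1, Or.inl rfl, 1, ⟨hn.1, by simp⟩, one_mul 1⟩
      · obtain ⟨q, hq, hqn⟩ := Nat.exists_prime_and_dvd hn₁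
        obtain ⟨k, m, hm, rfl⟩ := exists_eq_pow_succ_mul_of_mem_smoothOmegaLE hn hq hqn
        have hqP : q ≤ P := Nat.lt_succ_iff.1 (Nat.mem_smoothNumbers'.1 hn.1 q hq hqn)
        exact ⟨q ^ (k + 1), Or.inr (Set.mem_iUnion₂.2 ⟨⟨⟨q, hq⟩, hqP⟩, k, rfl⟩), m, hm, rfl⟩
    calc ∑' n : smoothOmegaLE (j + 1) P, f n
        ≤ (∑' a : smoothPrimePows P, f a) * ∑' b : smoothOmegaLE j P, f b := by
          refine tsum_subtype_le_tsum_mul_tsum fun n hn ↦ ?_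
          obtain ⟨a, ha, b, hb, rfl⟩ := exists_mul_eq n hn
          exact ⟨a, ha, b, hb, rfl, (natCast_mul_rpow a b (-s)).le⟩
      _ ≤ (C * (P : ℝ≥0∞) ^ κ) ^ (j + 1) := by
          rw [pow_succ']
          exact mul_le_mul' (hC P hP) ih

lemma natCast_mul_rpow_neg_le {s : ℝ} (hs : s ≤ 1) {d z : ℕ} (hz : z ≠ 0) (hd : d ∣ z) :
    (d : ℝ≥0∞) * (d : ℝ≥0∞) ^ (-s) ≤ (z : ℝ≥0∞) ^ (1 - s) := by
  have hd₀ : d ≠ 0 := ne_zero_of_dvd_ne_zero hz hd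
  have hdz : d ≤ z := Nat.le_of_dvd hz.bot_lt hd
  calc (d : ℝ≥0∞) * (d : ℝ≥0∞) ^ (-s) = (d : ℝ≥0∞) ^ (1 - s) := by
        rw [sub_eq_add_neg, natCast_rpow_add hd₀, ENNReal.rpow_one]
    _ ≤ (z : ℝ≥0∞) ^ (1 - s) := by
        gcongr

lemma exists_tsum_divisors_mul_rpow_le {s η : ℝ} (hs : s ≤ 1) (hη : 0 < η) :
    ∃ C : ℝ≥0, ∀ z : ℕ, z ≠ 0 →
      ∑' d : (z.divisors : Set ℕ), (d : ℕ) * ((d : ℕ) : ℝ≥0∞) ^ (-s) ≤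
        C * (z : ℝ≥0∞) ^ (1 - s + η) := by
  obtain ⟨C, hC, hcard⟩ := exists_card_divisors_le_mul_rpow hη
  refine ⟨C.toNNReal, fun z hz ↦ ?_⟩
  have hcard' : (z.divisors.card : ℝ≥0∞) ≤ C.toNNReal * (z : ℝ≥0∞) ^ η := by
    rw [← ENNReal.ofReal_natCast z, ENNReal.ofReal_rpow_of_pos (by exact_mod_cast hz.bot_lt),
      ← ENNReal.ofReal, ← ENNReal.ofReal_mul hC.le, ← ENNReal.ofReal_natCast]
    exact ENNReal.ofReal_le_ofReal (hcard z hz)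
  calc ∑' d : (z.divisors : Set ℕ), (d : ℕ) * ((d : ℕ) : ℝ≥0∞) ^ (-s)
      = ∑ d ∈ z.divisors, (d : ℝ≥0∞) * (d : ℝ≥0∞) ^ (-s) :=
        Finset.tsum_subtype' z.divisors fun d : ℕ ↦ (d : ℝ≥0∞) * (d : ℝ≥0∞) ^ (-s)
    _ ≤ z.divisors.card • (z : ℝ≥0∞) ^ (1 - s) := Finset.sum_le_card_nsmul _ _ _ fun d hd ↦
        natCast_mul_rpow_neg_le hs hz (Nat.dvd_of_mem_divisors hd)
    _ ≤ C.toNNReal * (z : ℝ≥0∞) ^ η * (z : ℝ≥0∞) ^ (1 - s) := by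
        rw [nsmul_eq_mul]
        gcongr
    _ = C.toNNReal * (z : ℝ≥0∞) ^ (1 - s + η) := by
        rw [mul_assoc, ← natCast_rpow_add hz, add_comm η]

lemma tsum_gcd_mul_rpow_le {M : Set ℕ} (hM : ∀ m ∈ M, ∀ d, d ∣ m → d ∈ M) {z : ℕ} (hz : z ≠ 0)
    (s : ℝ) :
    ∑' m : M, ((m : ℕ).gcd z : ℝ≥0∞) * ((m : ℕ) : ℝ≥0∞) ^ (-s) ≤
      (∑' d : (z.divisors : Set ℕ), (d : ℕ) * ((d : ℕ) : ℝ≥0∞) ^ (-s)) *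
        ∑' m : M, ((m : ℕ) : ℝ≥0∞) ^ (-s) := by
  refine tsum_subtype_le_tsum_mul_tsum (f := fun m : ℕ ↦ (m.gcd z : ℝ≥0∞) * (m : ℝ≥0∞) ^ (-s))
    (g := fun d : ℕ ↦ (d : ℝ≥0∞) * (d : ℝ≥0∞) ^ (-s)) (h := fun m : ℕ ↦ (m : ℝ≥0∞) ^ (-s))
    fun m hm ↦ ?_
  have hgcd : m.gcd z * (m / m.gcd z) = m := Nat.mul_div_cancel' (Nat.gcd_dvd_left m z)
  refine ⟨m.gcd z, Nat.mem_divisors.2 ⟨Nat.gcd_dvd_right m z, hz⟩, m / m.gcd z,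
    hM m hm _ (Nat.div_dvd_of_dvd (Nat.gcd_dvd_left m z)), hgcd, ?_⟩
  rw [mul_assoc, ← natCast_mul_rpow, hgcd]

theorem exists_tsum_gcd_mul_rpow_le {s κ η : ℝ} (hs₀ : 0 < s) (hs₁ : s ≤ 1) (hκ : 0 < κ)
    (hsκ : 1 < s + κ) (hη : 0 < η) (j : ℕ) :
    ∃ C : ℝ≥0, ∀ p z : ℕ, p.Prime → z ≠ 0 → p.Coprime z →
      ∑' n : {n ∈ smoothOmegaLE (j + 1) p | p ∣ n},
          ((n : ℕ).gcd z : ℝ≥0∞) * ((n : ℕ) : ℝ≥0∞) ^ (-s) ≤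
        C * ((p : ℝ≥0∞) ^ (κ * j - s) * (z : ℝ≥0∞) ^ (1 - s + η)) := by
  obtain ⟨C₁, hC₁⟩ := exists_tsum_divisors_mul_rpow_le hs₁ hη
  obtain ⟨C₂, hC₂⟩ := exists_tsum_smoothOmegaLE_le hs₀ hκ hsκ j
  have hA := one_sub_two_rpow_neg_inv_ne_top hs₀
  set A : ℝ≥0∞ := (1 - 2 ^ (-s))⁻¹
  refine ⟨A.toNNReal * (C₁ * C₂), fun p z hp hz hpz ↦ ?_⟩
  have split_le : ∀ n ∈ {n ∈ smoothOmegaLE (j + 1) p | p ∣ n},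
      ∃ a ∈ ⋃ k, {p ^ (k + 1)}, ∃ m ∈ smoothOmegaLE j p, a * m = n ∧
        (n.gcd z : ℝ≥0∞) * (n : ℝ≥0∞) ^ (-s) ≤
          (a : ℝ≥0∞) ^ (-s) * ((m.gcd z : ℝ≥0∞) * (m : ℝ≥0∞) ^ (-s)) := by
    rintro n ⟨hn, hpn⟩
    obtain ⟨k, m, hm, rfl⟩ := exists_eq_pow_succ_mul_of_mem_smoothOmegaLE hn hp hpn
    refine ⟨p ^ (k + 1), Set.mem_iUnion.2 ⟨k, rfl⟩, m, hm, rfl, ?_⟩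
    rw [(hpz.pow_left (k + 1)).gcd_mul_left_cancel, natCast_mul_rpow, mul_left_comm]
  calc ∑' n : {n ∈ smoothOmegaLE (j + 1) p | p ∣ n},
        ((n : ℕ).gcd z : ℝ≥0∞) * ((n : ℕ) : ℝ≥0∞) ^ (-s)
      ≤ (∑' a : ⋃ k, {p ^ (k + 1)}, ((a : ℕ) : ℝ≥0∞) ^ (-s)) *
          ∑' m : smoothOmegaLE j p, ((m : ℕ).gcd z : ℝ≥0∞) * ((m : ℕ) : ℝ≥0∞) ^ (-s) :=
        tsum_subtype_le_tsum_mul_tsum split_le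
    _ ≤ (A * (p : ℝ≥0∞) ^ (-s)) *
          ((C₁ * (z : ℝ≥0∞) ^ (1 - s + η)) * (C₂ * (p : ℝ≥0∞) ^ (κ * j))) := by
        gcongr
        · exact (tsum_iUnion_singleton_le (fun a : ℕ ↦ (a : ℝ≥0∞) ^ (-s)) _).trans
            (tsum_prime_pow_rpow_le hs₀.le hp.two_le)
        · exact (tsum_gcd_mul_rpow_le (fun m hm d ↦ mem_smoothOmegaLE_of_dvd hm) hz s).trans
            (mul_le_mul' (hC₁ z hz) (hC₂ p hp.ne_zero))
    _ = _ := by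
        rw [sub_eq_neg_add (κ * j), natCast_rpow_add hp.ne_zero, ENNReal.coe_mul, ENNReal.coe_mul,
          ENNReal.coe_toNNReal hA]
        ring

end SmoothSums

section Primes

lemma tsum_mul_rpow_neg_ne_top {b : ℝ} (hb : 2 < b) :
    ∑' t : ℕ, (t : ℝ≥0∞) * (t : ℝ≥0∞) ^ (-b) ≠ ⊤ := by
  have h := (Real.summable_nat_rpow.2 (show 1 - b < -1 by linarith)).tsum_ofReal_ne_top
  refine ne_top_of_le_ne_top h (ENNReal.tsum_le_tsum fun t ↦ ?_)
  obtain rfl | ht := eq_or_ne t 0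
  · simp
  · rw [← ENNReal.ofReal_rpow_of_pos (by exact_mod_cast ht.bot_lt), ENNReal.ofReal_natCast,
      sub_eq_add_neg, natCast_rpow_add ht, ENNReal.rpow_one]

lemma tsum_rpow_neg_ne_top_of_encard_le {X : Type*} {z : X → ℕ} {K : ℕ}
    (hK : ∀ t, {x | z x = t}.encard ≤ (K * t : ℕ)) {b : ℝ} (hb : 2 < b) :
    ∑' x, (z x : ℝ≥0∞) ^ (-b) ≠ ⊤ := by
  have fibre_le (t : ℕ) : ∑' x : z ⁻¹' {t}, (z x : ℝ≥0∞) ^ (-b) ≤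
      K * ((t : ℝ≥0∞) * (t : ℝ≥0∞) ^ (-b)) :=
    calc ∑' x : z ⁻¹' {t}, (z x : ℝ≥0∞) ^ (-b) = ∑' _ : z ⁻¹' {t}, (t : ℝ≥0∞) ^ (-b) :=
          tsum_congr fun x ↦ by rw [show z x = t from x.2]
      _ = (z ⁻¹' {t}).encard * (t : ℝ≥0∞) ^ (-b) := ENNReal.tsum_set_const _ _
      _ ≤ ((K * t : ℕ) : ℕ∞) * (t : ℝ≥0∞) ^ (-b) := by
          gcongr
          exact hK t
      _ = K * ((t : ℝ≥0∞) * (t : ℝ≥0∞) ^ (-b)) := by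
          push_cast
          rw [mul_assoc]
  rw [← ENNReal.tsum_fiberwise _ z]
  refine ne_top_of_le_ne_top ?_ (ENNReal.tsum_le_tsum fibre_le)
  rw [ENNReal.tsum_mul_left]
  exact ENNReal.mul_ne_top (ENNReal.natCast_ne_top K) (tsum_mul_rpow_neg_ne_top hb)

lemma natCast_rpow_neg_le {m n : ℕ} (hmn : m ≤ n) {x : ℝ} (hx : 0 ≤ x) :
    (n : ℝ≥0∞) ^ (-x) ≤ (m : ℝ≥0∞) ^ (-x) := by
  rw [ENNReal.rpow_neg, ENNReal.rpow_neg]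
  gcongr

lemma natCast_sq_rpow (n : ℕ) (x : ℝ) : ((n ^ 2 : ℕ) : ℝ≥0∞) ^ x = (n : ℝ≥0∞) ^ (2 * x) := by
  rw [Nat.cast_pow, ENNReal.rpow_mul, ENNReal.rpow_ofNat]

/- Primes `p ≤ z p ^ 2` are summed over `p`, the other ones over the fibres of `z`. -/
theorem tsum_primes_rpow_mul_rpow_ne_top {z : Nat.Primes → ℕ} (hz : ∀ p, z p ≠ 0) {K : ℕ}
    (hK : ∀ t, {p | z p = t}.encard ≤ (K * t : ℕ)) {α β : ℝ} (hα : 0 ≤ α) (hβ : 0 ≤ β)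
    (hαβ : 1 < α + β / 2) :
    ∑' p : Nat.Primes, ((p : ℕ) : ℝ≥0∞) ^ (-α) * (z p : ℝ≥0∞) ^ (-β) ≠ ⊤ := by
  have term_le (p : Nat.Primes) : ((p : ℕ) : ℝ≥0∞) ^ (-α) * (z p : ℝ≥0∞) ^ (-β) ≤
      ((p : ℕ) : ℝ≥0∞) ^ (-(α + β / 2)) + (z p : ℝ≥0∞) ^ (-(2 * α + β)) := by
    obtain hle | hle := le_total (p : ℕ) (z p ^ 2)
    · refine le_add_right ?_
      rw [show -β = 2 * -(β / 2) by ring, ← natCast_sq_rpow, neg_add,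
        natCast_rpow_add p.2.ne_zero]
      exact mul_le_mul' le_rfl (natCast_rpow_neg_le hle (by linarith))
    · refine le_add_left ?_
      rw [neg_add, ← mul_neg, natCast_rpow_add (hz p), ← natCast_sq_rpow]
      exact mul_le_mul' (natCast_rpow_neg_le hle hα) le_rfl
  refine ne_top_of_le_ne_top ?_ (ENNReal.tsum_le_tsum term_le)
  rw [ENNReal.tsum_add]
  exact ENNReal.add_ne_top.2 ⟨tsum_primes_rpow_ne_top hαβ,
    tsum_rpow_neg_ne_top_of_encard_le hK (by linarith)⟩

end Primes

section WeightedSeries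

lemma exists_rpow_mul_rho_div_totient_le {lam : ℕ} (hlam : 0 < lam) (σ : ℝ) {η : ℝ}
    (hη : 0 < η) :
    ∃ C : ℝ, 0 < C ∧ ∀ n z l : ℕ, l ≠ 0 → n ∣ l → z ∣ l →
      (n : ℝ) ^ σ * (rho lam n / φ l) ≤
        C * (n.gcd z * (n : ℝ) ^ (-(1 - σ - 2 * η)) * (z : ℝ) ^ (-(1 - η))) := by
  obtain ⟨C₁, hC₁, hrho⟩ := exists_rho_le_mul_rpow hlam hη
  obtain ⟨C₂, hC₂, htot⟩ := exists_inv_totient_le_mul_rpow hη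
  refine ⟨C₁ * C₂ ^ 2, by positivity, fun n z l hl hnl hzl ↦ ?_⟩
  have hn : n ≠ 0 := ne_zero_of_dvd_ne_zero hl hnl
  have hz : z ≠ 0 := ne_zero_of_dvd_ne_zero hl hzl
  have φ_pos {m : ℕ} (hm : m ≠ 0) : (0 : ℝ) < φ m := by exact_mod_cast Nat.totient_pos.2 hm.bot_lt
  have inv_totient_le : (φ l : ℝ)⁻¹ ≤ n.gcd z * ((φ n : ℝ)⁻¹ * (φ z : ℝ)⁻¹) := by
    have hle : (φ n * φ z : ℝ) ≤ n.gcd z * φ l := by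
      exact_mod_cast (totient_mul_totient_le_gcd_mul_totient_lcm n z).trans (Nat.mul_le_mul_left _
        (Nat.le_of_dvd (Nat.totient_pos.2 hl.bot_lt)
          (Nat.totient_dvd_of_dvd (Nat.lcm_dvd hnl hzl))))
    rw [← mul_inv, ← div_eq_mul_inv, inv_le_iff_one_le_mul₀ (φ_pos hl), div_mul_eq_mul_div,
      one_le_div (mul_pos (φ_pos hn) (φ_pos hz))]
    exact hle
  have hn' : (0 : ℝ) < n := by exact_mod_cast hn.bot_lt
  calc (n : ℝ) ^ σ * (rho lam n / φ l)
      ≤ (n : ℝ) ^ σ * (C₁ * (n : ℝ) ^ η *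
          (n.gcd z * (C₂ * (n : ℝ) ^ (η - 1) * (C₂ * (z : ℝ) ^ (η - 1))))) := by
        rw [div_eq_mul_inv]
        gcongr
        · exact hrho n
        · exact inv_totient_le.trans (by gcongr; exacts [htot n hn, htot z hz])
    _ = C₁ * C₂ ^ 2 * (n.gcd z * (n : ℝ) ^ (-(1 - σ - 2 * η)) * (z : ℝ) ^ (-(1 - η))) := by
        rw [show -(1 - σ - 2 * η) = σ + (η + (η - 1)) by ring, Real.rpow_add hn',
          Real.rpow_add hn', neg_sub]
        ring

lemma exists_ofReal_rpow_mul_rho_div_totient_le {lam : ℕ} (hlam : 0 < lam) (σ : ℝ) {η : ℝ}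
    (hη : 0 < η) :
    ∃ C : ℝ≥0, ∀ n z l : ℕ, l ≠ 0 → n ∣ l → z ∣ l →
      ENNReal.ofReal ((n : ℝ) ^ σ * (rho lam n / φ l)) ≤
        C * ((n.gcd z * (n : ℝ≥0∞) ^ (-(1 - σ - 2 * η))) * (z : ℝ≥0∞) ^ (-(1 - η))) := by
  obtain ⟨C, hC, hle⟩ := exists_rpow_mul_rho_div_totient_le hlam σ hη
  refine ⟨C.toNNReal, fun n z l hl hnl hzl ↦ ?_⟩
  have ofReal_rpow {m : ℕ} (hm : m ∣ l) (x : ℝ) :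
      ENNReal.ofReal ((m : ℝ) ^ x) = (m : ℝ≥0∞) ^ x := by
    have hm₀ : 0 < m := Nat.pos_of_dvd_of_pos hm hl.bot_lt
    rw [← ENNReal.ofReal_rpow_of_pos (by exact_mod_cast hm₀), ENNReal.ofReal_natCast]
  refine (ENNReal.ofReal_le_ofReal (hle n z l hl hnl hzl)).trans_eq ?_
  rw [ENNReal.ofReal_mul hC.le, ENNReal.ofReal_mul (by positivity),
    ENNReal.ofReal_mul (by positivity), ofReal_rpow hnl, ofReal_rpow hzl, ENNReal.ofReal_natCast,
    ENNReal.ofReal]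

lemma exists_prime_mem_smoothOmegaLE_of_rho_ne_zero {lam n : ℕ} (hlam : 0 < lam)
    (h : rho lam n ≠ 0) : ∃ p : Nat.Primes, n ∈ smoothOmegaLE lam p ∧ (p : ℕ) ∣ n := by
  have hn := primeFactors_nonempty_of_rho_ne_zero hlam h
  have hmem := n.primeFactors.max'_mem hn
  refine ⟨⟨_, Nat.prime_of_mem_primeFactors hmem⟩,
    ⟨Nat.mem_smoothNumbers'.2 fun q hq hqn ↦ Nat.lt_succ_of_le ?_,
      card_primeFactors_le_of_rho_ne_zero h⟩, Nat.dvd_of_mem_primeFactors hmem⟩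
  exact Finset.le_max' _ _ (Nat.mem_primeFactors.2 ⟨hq, hqn, (Nat.mem_primeFactors.1 hmem).2.2⟩)

lemma exists_tsum_multiples_rpow_mul_rho_div_totient_le {σ η : ℝ} (hσ : 0 ≤ σ) (hη : 0 < η)
    (hση : σ + 4 * η < 1) (j : ℕ) :
    ∃ C : ℝ≥0, ∀ (p z : ℕ) (l : ℕ → ℕ), p.Prime → z ≠ 0 → p.Coprime z → (∀ n, n ∣ l n) →
      (∀ n, p ∣ n → l n ≠ 0 → z ∣ l n) →
      ∑' n : {n ∈ smoothOmegaLE (j + 1) p | p ∣ n},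
          ENNReal.ofReal ((n : ℝ) ^ σ * (rho (j + 1) n / φ (l n))) ≤
        C * ((p : ℝ≥0∞) ^ (-(1 - (σ + 4 * η) * (j + 1))) *
          (z : ℝ≥0∞) ^ (-(1 - (σ + 4 * η)))) := by
  obtain ⟨C₁, hC₁⟩ := exists_ofReal_rpow_mul_rho_div_totient_le j.succ_pos σ hη
  obtain ⟨s, hs⟩ : ∃ s, 1 - σ - 2 * η = s := ⟨_, rfl⟩
  simp only [hs] at hC₁
  obtain ⟨C₂, hC₂⟩ := exists_tsum_gcd_mul_rpow_le (s := s) (κ := σ + 4 * η) (η := η)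
    (by linarith) (by linarith) (by linarith) (by linarith) hη j
  refine ⟨C₁ * C₂, fun p z l hp hz hpz hnl hzl ↦ ?_⟩
  have term_le (n : ℕ) (hpn : p ∣ n) : ENNReal.ofReal ((n : ℝ) ^ σ * (rho (j + 1) n / φ (l n))) ≤
      C₁ * (z : ℝ≥0∞) ^ (-(1 - η)) * ((n.gcd z : ℝ≥0∞) * (n : ℝ≥0∞) ^ (-s)) := by
    obtain hl | hl := eq_or_ne (l n) 0
    · simp [hl]
    · rw [mul_assoc, mul_comm ((z : ℝ≥0∞) ^ _)]
      exact hC₁ n z (l n) hl (hnl n) (hzl n hpn hl)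
  calc ∑' n : {n ∈ smoothOmegaLE (j + 1) p | p ∣ n},
        ENNReal.ofReal ((n : ℝ) ^ σ * (rho (j + 1) n / φ (l n)))
      ≤ C₁ * (z : ℝ≥0∞) ^ (-(1 - η)) * ∑' n : {n ∈ smoothOmegaLE (j + 1) p | p ∣ n},
          ((n : ℕ).gcd z : ℝ≥0∞) * ((n : ℕ) : ℝ≥0∞) ^ (-s) := by
        rw [← ENNReal.tsum_mul_left]
        exact ENNReal.tsum_le_tsum fun n ↦ term_le n n.2.2
    _ ≤ C₁ * (z : ℝ≥0∞) ^ (-(1 - η)) *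
          (C₂ * ((p : ℝ≥0∞) ^ ((σ + 4 * η) * j - s) * (z : ℝ≥0∞) ^ (1 - s + η))) := by
        gcongr
        exact hC₂ p z hp hz hpz
    _ = C₁ * C₂ * ((p : ℝ≥0∞) ^ ((σ + 4 * η) * j - s) *
          (z : ℝ≥0∞) ^ (-(1 - (σ + 4 * η)))) := by
        rw [show -(1 - (σ + 4 * η)) = -(1 - η) + (1 - s + η) by linarith,
          natCast_rpow_add hz (-(1 - η))]
        ring
    _ ≤ _ := by
        push_cast
        gcongr
        · exact_mod_cast hp.one_le
        · linarith

theorem tsum_rpow_mul_rho_div_totient_ne_top {z : Nat.Primes → ℕ} {l : ℕ → ℕ}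
    (hz : ∀ p, z p ≠ 0) (hcop : ∀ p : Nat.Primes, (p : ℕ).Coprime (z p)) {K : ℕ}
    (hK : ∀ t, {p | z p = t}.encard ≤ (K * t : ℕ)) (hnl : ∀ n, n ∣ l n)
    (hzl : ∀ (p : Nat.Primes) (n : ℕ), (p : ℕ) ∣ n → l n ≠ 0 → z p ∣ l n)
    {lam : ℕ} (hlam : 0 < lam) {σ : ℝ} (hσ₀ : 0 ≤ σ) (hσ : σ < 1 / (1 + 2 * lam)) :
    ∑' n : ℕ, ENNReal.ofReal ((n : ℝ) ^ σ * (rho lam n / φ (l n))) ≠ ⊤ := by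
  obtain ⟨j, rfl⟩ := Nat.exists_eq_succ_of_ne_zero hlam.ne'
  obtain ⟨κ, hσκ, hκ⟩ := exists_between hσ
  obtain ⟨η, hη, rfl⟩ : ∃ η, 0 < η ∧ σ + 4 * η = κ := ⟨(κ - σ) / 4, by linarith, by ring⟩
  set κ := σ + 4 * η
  rw [lt_div_iff₀ (by positivity), Nat.cast_succ] at hκ
  have hκj : 0 ≤ κ * j := mul_nonneg (by linarith) j.cast_nonneg
  let f (n : ℕ) : ℝ≥0∞ := ENNReal.ofReal ((n : ℝ) ^ σ * (rho (j + 1) n / φ (l n)))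
  let L (p : Nat.Primes) : Set ℕ := {n ∈ smoothOmegaLE (j + 1) p | (p : ℕ) ∣ n}
  have support_subset : Function.support f ⊆ ⋃ p, L p := fun n hn ↦
    Set.mem_iUnion.2 <|
      exists_prime_mem_smoothOmegaLE_of_rho_ne_zero hlam fun h ↦ hn (by simp [f, h])
  obtain ⟨C, hC⟩ := exists_tsum_multiples_rpow_mul_rho_div_totient_le hσ₀ hη
    (show κ < 1 by linarith) j
  have tsum_le (p : Nat.Primes) : ∑' n : L p, f n ≤
      C * (((p : ℕ) : ℝ≥0∞) ^ (-(1 - κ * (j + 1))) * (z p : ℝ≥0∞) ^ (-(1 - κ))) :=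
    hC p (z p) l p.2 (hz p) (hcop p) hnl (hzl p)
  rw [← tsum_subtype_eq_of_support_subset support_subset]
  refine ne_top_of_le_ne_top ?_
    ((ENNReal.tsum_iUnion_le_tsum f L).trans (ENNReal.tsum_le_tsum tsum_le))
  rw [ENNReal.tsum_mul_left]
  refine ENNReal.mul_ne_top ENNReal.coe_ne_top
    (tsum_primes_rpow_mul_rpow_ne_top hz hK ?_ ?_ ?_) <;> linarith

end WeightedSeries

section Rankin

/- Rankin's trick: `y ^ σ ≤ n ^ σ` for `n ≥ y`. -/
lemma summable_tail_and_tsum_tail_le {f : ℕ → ℝ} (hf : ∀ n, 0 ≤ f n) {σ : ℝ} (hσ : 0 ≤ σ)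
    (hsum : Summable fun n : ℕ ↦ (n : ℝ) ^ σ * f n) {y : ℝ} (hy : 0 < y) {P : ℕ → Prop}
    [DecidablePred P] (hP : ∀ n, P n → y ≤ n) :
    Summable (fun n ↦ if P n then f n else 0) ∧
      ∑' n, (if P n then f n else 0) ≤ (∑' n : ℕ, (n : ℝ) ^ σ * f n) / y ^ σ := by
  have tail_le (n : ℕ) : (if P n then f n else 0) ≤ (n : ℝ) ^ σ * f n / y ^ σ := by
    split_ifs with hn
    · rw [le_div_iff₀ (by positivity), mul_comm]
      gcongr
      exacts [hf n, hP n hn]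
    · exact div_nonneg (mul_nonneg (by positivity) (hf n)) (by positivity)
  have tail_summable : Summable fun n ↦ if P n then f n else 0 :=
    (hsum.div_const _).of_nonneg_of_le (fun n ↦ by split_ifs <;> [exact hf n; rfl]) tail_le
  exact ⟨tail_summable,
    (tail_summable.tsum_le_tsum tail_le (hsum.div_const _)).trans_eq tsum_div_const⟩

end Rankin

/- If `p ∣ n` but `n` divides no term of `u`, then `zu u n = 0`, hence `ellu u n = 0`, and the
summand of index `n` is `x / 0 = 0`. -/
theorem IsLucasSeq.summable_rpow_mul_rho_div_totient_ellu {a b : ℤ} {u : ℕ → ℤ}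
    (hu : IsLucasSeq a b u) (hb : b ≠ 0) (hΔ : a ^ 2 + 4 * b ≠ 0) (hne : ∀ n, 0 < n → u n ≠ 0)
    {lam : ℕ} (hlam : 0 < lam) {σ : ℝ} (hσ₀ : 0 ≤ σ) (hσ : σ < 1 / (1 + 2 * lam)) :
    Summable fun n : ℕ ↦ (n : ℝ) ^ σ * (rho lam n / φ (ellu u n)) := by
  obtain ⟨K, hK⟩ := hu.exists_encard_setOf_tameRank_eq_le hb hΔ hne
  have rank_dvd (p : Nat.Primes) (n : ℕ) (hpn : (p : ℕ) ∣ n) (hl : ellu u n ≠ 0) :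
      tameRank a b u p ∣ ellu u n :=
    (hu.tameRank_dvd_zu p.2 hpn (ne_zero_of_dvd_ne_zero hl (Nat.dvd_lcm_right _ _))).trans
      (Nat.dvd_lcm_right _ _)
  have tsum_ne_top := tsum_rpow_mul_rho_div_totient_ne_top (z := fun p ↦ tameRank a b u p)
    (fun p ↦ (hu.tameRank_spec p.2).1.ne') (fun p ↦ (hu.tameRank_spec p.2).2.1) hK
    (fun _ ↦ Nat.dvd_lcm_left _ _) rank_dvd hlam hσ₀ hσ
  refine (ENNReal.summable_toReal tsum_ne_top).congr fun n ↦ ENNReal.toReal_ofReal ?_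
  exact mul_nonneg (by positivity) (div_nonneg (rho_nonneg lam n) (Nat.cast_nonneg _))

theorem statement2_general (a₁ a₂ : ℤ) (ha₂ : a₂ ≠ 0) (hΔ : a₁ ^ 2 + 4 * a₂ ≠ 0)
    (u : ℕ → ℤ) (hu0 : u 0 = 0) (hu1 : u 1 = 1)
    (hrec : ∀ n : ℕ, u (n + 2) = a₁ * u (n + 1) + a₂ * u n)
    (hnd : ∀ α β : ℂ, α ^ 2 = (a₁ : ℂ) * α + (a₂ : ℂ) →
      β ^ 2 = (a₁ : ℂ) * β + (a₂ : ℂ) → α ≠ β → ∀ k : ℕ, 0 < k → (α / β) ^ k ≠ 1)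
    (lam : ℕ) (hlam : 0 < lam) (σ : ℝ) (hσ : σ < 1 / (1 + 2 * (lam : ℝ))) :
    ∃ C : ℝ, 0 < C ∧ ∀ y : ℝ, 1 ≤ y →
      Summable (fun n : ℕ =>
        if 0 < n ∧ y ≤ (n : ℝ) ∧ Int.gcd (n : ℤ) a₂ = 1 then
          rho lam n / (Nat.totient (ellu u n) : ℝ) else 0) ∧
      (∑' n : ℕ, if 0 < n ∧ y ≤ (n : ℝ) ∧ Int.gcd (n : ℤ) a₂ = 1 then
          rho lam n / (Nat.totient (ellu u n) : ℝ) else 0) ≤ C / y ^ σ := by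
  have hu : IsLucasSeq a₁ a₂ u := ⟨hu0, hu1, hrec⟩
  have term_nonneg (n : ℕ) : 0 ≤ rho lam n / (φ (ellu u n) : ℝ) :=
    div_nonneg (rho_nonneg lam n) (Nat.cast_nonneg _)
  have hsum := hu.summable_rpow_mul_rho_div_totient_ellu ha₂ hΔ
    (fun n ↦ hu.ne_zero ha₂ hΔ hnd) hlam (le_max_right σ 0) (max_lt hσ (by positivity))
  have series_nonneg : 0 ≤ ∑' n : ℕ, (n : ℝ) ^ max σ 0 * (rho lam n / φ (ellu u n)) :=
    tsum_nonneg fun n ↦ mul_nonneg (by positivity) (term_nonneg n)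
  refine ⟨∑' n : ℕ, (n : ℝ) ^ max σ 0 * (rho lam n / φ (ellu u n)) + 1, by positivity,
    fun y hy ↦ ?_⟩
  obtain ⟨tail_summable, tail_le⟩ := summable_tail_and_tsum_tail_le term_nonneg
    (le_max_right σ 0) hsum (zero_lt_one.trans_le hy)
    (P := fun n : ℕ ↦ 0 < n ∧ y ≤ n ∧ Int.gcd n a₂ = 1) fun n hn ↦ hn.2.1
  refine ⟨tail_summable, tail_le.trans ?_⟩
  gcongr
  exacts [le_add_of_nonneg_right zero_le_one, le_max_left σ 0]

lemma div_rpow_le_mul_log_log_div_rpow {C y : ℝ} (hC : 0 ≤ C)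
    (hy : Real.exp (Real.exp 1) ≤ y) (σ : ℝ) :
    C / y ^ σ ≤ C * Real.log (Real.log y) / y ^ σ := by
  have y_pos : 0 < y := (Real.exp_pos _).trans_le hy
  have exp_one_le_log : Real.exp 1 ≤ Real.log y := (Real.le_log_iff_exp_le y_pos).2 hy
  have one_le_log_log : 1 ≤ Real.log (Real.log y) :=
    (Real.le_log_iff_exp_le ((Real.exp_pos _).trans_le exp_one_le_log)).2 exp_one_le_log
  gcongr
  exact le_mul_of_one_le_right hC one_le_log_log

/-- For every positive integer `λ` and `ε ∈ (0, 1/5]` there are `C, y₀ > 0`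
such that for all `y ≥ y₀`,
`Σ_{n ≥ y, (n,a₂)=1} ρ_λ(n)/φ(ℓ(n)) ≤ C·(log log y)/y^{1/(1+3λ)−ε}`. -/
theorem statement2 (a₁ a₂ : ℤ) (hcop : IsCoprime a₁ a₂) (ha₂ : a₂ ≠ 0)
    (hΔ : a₁ ^ 2 + 4 * a₂ ≠ 0)
    (u : ℕ → ℤ) (hu0 : u 0 = 0) (hu1 : u 1 = 1)
    (hrec : ∀ n : ℕ, u (n + 2) = a₁ * u (n + 1) + a₂ * u n)
    (hnd : ∀ α β : ℂ, α ^ 2 = (a₁ : ℂ) * α + (a₂ : ℂ) →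
      β ^ 2 = (a₁ : ℂ) * β + (a₂ : ℂ) → α ≠ β → ∀ k : ℕ, 0 < k → (α / β) ^ k ≠ 1)
    (lam : ℕ) (hlam : 0 < lam) (ε : ℝ) (hε₀ : 0 < ε) (hε₁ : ε ≤ 1 / 5) :
    ∃ C y₀ : ℝ, 0 < C ∧ 0 < y₀ ∧ ∀ y : ℝ, y₀ ≤ y →
      Summable (fun n : ℕ =>
        if 0 < n ∧ y ≤ (n : ℝ) ∧ Int.gcd (n : ℤ) a₂ = 1 then
          rho lam n / (Nat.totient (ellu u n) : ℝ) else 0) ∧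
      (∑' n : ℕ, if 0 < n ∧ y ≤ (n : ℝ) ∧ Int.gcd (n : ℤ) a₂ = 1 then
          rho lam n / (Nat.totient (ellu u n) : ℝ) else 0) ≤
        C * Real.log (Real.log y) / y ^ (1 / (1 + 3 * (lam : ℝ)) - ε) := by
  obtain ⟨C, hC, hle⟩ := statement2_general a₁ a₂ ha₂ hΔ u hu0 hu1 hrec hnd lam hlam
    (1 / (1 + 3 * lam) - ε) (lt_of_lt_of_le (sub_lt_self _ hε₀) (by gcongr; norm_num))
  refine ⟨C, Real.exp (Real.exp 1), hC, Real.exp_pos _, fun y hy ↦ ?_⟩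
  exact (hle y ((Real.one_le_exp (Real.exp_pos 1).le).trans hy)).imp_right
    fun tail_le ↦ tail_le.trans (div_rpow_le_mul_log_log_div_rpow hC.le hy _)
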